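/- For all integers ℓ ≥ 1 and t ≥ 1, the poset C_ℓ(t) (the t-fold blow-up of the chain of length ℓ) satisfies (log 2)/ℓ ≤ c_⋆(C_ℓ(t)) ≤ (log 2)/ℓ + log( ℓ − (ℓ−1)·2^{−t} ) / (ℓ·t). -/

import Mathlib

open Classical in
/-- The finset of all antichains (including the empty antichain) of a finite poset `P`. -/
noncomputable def antichains (P : Type*) [Fintype P] [PartialOrder P] : Finset (Finset P) :=
  Finset.univ.filter (fun A => IsAntichain (· ≤ ·) (A : Set P))

/-- The upper shadow `∂_Q S` of an antichain `S` of `P` inside a subset `Q ⊆ P`. -/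
def upperShadow {P : Type*} [PartialOrder P] (Q : Set P) (S : Set P) : Set P :=
  {y | y ∈ Q ∧ (∃ x ∈ S, x ≤ y) ∧ ∀ z ∈ Q, z < y → ∀ x ∈ S, ¬ x ≤ z}

open Classical in
/-- The antichains of the subposet `Q ⊆ P`, i.e. antichains of `P` contained in `Q`. -/
noncomputable def antichainsIn {P : Type*} [Fintype P] [PartialOrder P] (Q : Set P) :
    Finset (Finset P) :=
  (antichains P).filter (fun A => (A : Set P) ⊆ Q)

/-- A weighting `α ∈ Δ_{a(P)}`: a nonnegative function on the antichains of `P`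
(extended by `0` off the antichains) summing to `1`. -/
def IsWeighting {P : Type*} [Fintype P] [PartialOrder P] (α : Finset P → ℝ) : Prop :=
  (∀ A ∈ antichains P, 0 ≤ α A) ∧ (∀ A ∉ antichains P, α A = 0) ∧
    ∑ A ∈ antichains P, α A = 1

open Classical in
/-- The shadow weighting `∂_Q(α)`: the coordinate of `∂_Q(α)` at an antichain `T` of `Q`
is the sum of `α` over all antichains of `P` whose upper shadow in `Q` is `T`. -/
noncomputable def shadowWeight {P : Type*} [Fintype P] [PartialOrder P]
    (α : Finset P → ℝ) (Q : Set P) (T : Finset P) : ℝ :=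
  ∑ A ∈ (antichains P).filter (fun B : Finset P => upperShadow Q (B : Set P) = (T : Set P)), α A

/-- The critical exponent `c_{α,P}(Q) = H_{a(Q)}(∂_Q(α)) / |Q|` of a subposet `Q` of `P`
with respect to a weighting `α` (natural logarithm; `0 log 0 = 0`). -/
noncomputable def critExp {P : Type*} [Fintype P] [PartialOrder P]
    (α : Finset P → ℝ) (Q : Set P) : ℝ :=
  (∑ T ∈ antichainsIn Q, -(shadowWeight α Q T * Real.log (shadowWeight α Q T))) /
    (Q.ncard : ℝ)

/-- The critical exponent `c_⋆(P) = max_{α ∈ Δ_{a(P)}} min_{∅ ≠ Q ⊆ P} c_{α,P}(Q)`,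
expressed as `sup {c ≥ 0 : ∃ α ∈ Δ_{a(P)}, ∀ ∅ ≠ Q ⊆ P, c ≤ c_{α,P}(Q)}`. -/
noncomputable def critStar (P : Type*) [Fintype P] [PartialOrder P] : ℝ :=
  sSup {c : ℝ | 0 ≤ c ∧ ∃ α : Finset P → ℝ, IsWeighting α ∧
    ∀ Q : Set P, Q.Nonempty → c ≤ critExp α Q}

/-- The binary entropy function `H₂(x) = -x log x - (1-x) log (1-x)` (natural log). -/
noncomputable def H₂ (x : ℝ) : ℝ := -(x * Real.log x) - (1 - x) * Real.log (1 - x)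

/-- The layered poset `C(s 0, …, s (ℓ-1))`: disjoint antichains `V 0, …, V (ℓ-1)` with
`|V i| = s i`, where `x < y` precisely when `x` lies in an earlier layer than `y`. -/
def Layered (ℓ : ℕ) (s : Fin ℓ → ℕ) : Type := (i : Fin ℓ) × Fin (s i)

instance (ℓ : ℕ) (s : Fin ℓ → ℕ) : PartialOrder (Layered ℓ s) where
  le x y := x.1 < y.1 ∨ x = y
  le_refl x := Or.inr rfl
  le_trans x y z hxy hyz := by
    rcases hxy with h | h
    · rcases hyz with h' | h'
      · exact Or.inl (h.trans h')
      · subst h'; exact Or.inl h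
    · subst h; exact hyz
  le_antisymm x y hxy hyx := by
    rcases hxy with h | h
    · rcases hyx with h' | h'
      · exact absurd (h.trans h') (lt_irrefl _)
      · exact h'.symm
    · exact h

instance (ℓ : ℕ) (s : Fin ℓ → ℕ) : Fintype (Layered ℓ s) :=
  inferInstanceAs (Fintype ((i : Fin ℓ) × Fin (s i)))

/-!
For the lower bound, choose a layer uniformly at random and then a uniformly random subset `S` of
it. The shadow of `S` in `Q` meets the layer `V` in `S ∩ Q`, so each value of the shadow has
conditional probability at most `2 ^ (-|V ∩ Q|)` given `V`, and its conditional entropy is at least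
`|V ∩ Q| log 2`. Averaging over the `ℓ` layers, concavity of entropy gives `|Q| log 2 / ℓ`.

For the upper bound, take `Q` to be the whole poset and bound the entropy by the logarithm of the
number of antichains; an antichain of a layered poset is a subset of a single layer.
-/

section Entropy

open Finset Real

variable {ι κ : Type*}

theorem sum_negMulLog_le_log_card {s : Finset ι} {p : ι → ℝ} (hp : ∀ i ∈ s, 0 ≤ p i)
    (hsum : ∑ i ∈ s, p i = 1) : ∑ i ∈ s, negMulLog (p i) ≤ log #s := by
  have hs : s.Nonempty := by
    by_contra! hs
    simp [hs] at hsum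
  have hcard : (0 : ℝ) < #s := by exact_mod_cast hs.card_pos
  have jensen : ∑ i ∈ s, (#s : ℝ)⁻¹ • negMulLog (p i) ≤ negMulLog (∑ i ∈ s, (#s : ℝ)⁻¹ • p i) :=
    concaveOn_negMulLog.le_map_sum (fun _ _ ↦ by positivity) (by simp [hcard.ne']) hp
  rw [← smul_sum, ← smul_sum, hsum] at jensen
  have hinv : negMulLog (#s : ℝ)⁻¹ = (#s : ℝ)⁻¹ * log #s := by simp [negMulLog]
  rw [smul_eq_mul, smul_eq_mul, mul_one, hinv] at jensen
  exact le_of_mul_le_mul_left jensen (inv_pos.2 hcard)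

theorem neg_log_le_sum_negMulLog {s : Finset ι} {p : ι → ℝ} {b : ℝ} (hp : ∀ i ∈ s, 0 ≤ p i)
    (hb : ∀ i ∈ s, p i ≤ b) (hsum : ∑ i ∈ s, p i = 1) : -log b ≤ ∑ i ∈ s, negMulLog (p i) := by
  have hterm : ∀ i ∈ s, p i * -log b ≤ negMulLog (p i) := by
    intro i hi
    obtain h0 | hpos := (hp i hi).eq_or_lt
    · simp [← h0]
    · rw [negMulLog, neg_mul, ← mul_neg]
      gcongr
      exact hb i hi
  simpa [← sum_mul, hsum] using sum_le_sum hterm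

theorem sum_mul_sum_negMulLog_le [Fintype κ] {w : κ → ℝ} (hw : w ∈ stdSimplex ℝ κ)
    {s : Finset ι} {p : κ → ι → ℝ} (hp : ∀ k, ∀ i ∈ s, 0 ≤ p k i) :
    ∑ k, w k * ∑ i ∈ s, negMulLog (p k i) ≤ ∑ i ∈ s, negMulLog (∑ k, w k * p k i) := by
  simp_rw [mul_sum]
  rw [sum_comm]
  exact sum_le_sum fun i hi ↦ by
    simpa using concaveOn_negMulLog.le_map_sum (fun k _ ↦ hw.1 k) hw.2 fun k _ ↦ hp k i hi

end Entropy

section Shadow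

open Finset

variable {P : Type*} [PartialOrder P]

theorem isAntichain_upperShadow (Q S : Set P) : IsAntichain (· ≤ ·) (upperShadow Q S) := by
  rintro x ⟨hxQ, ⟨w, hwS, hwx⟩, -⟩ y ⟨-, -, hy⟩ hne hle
  exact hy x hxQ (hle.lt_of_ne hne) w hwS hwx

theorem upperShadow_inter_of_subset {V : Set P} (hV : IsAntichain (· ≤ ·) V) (Q : Set P)
    {S : Set P} (hS : S ⊆ V) : upperShadow Q S ∩ V = S ∩ Q := by
  ext y
  constructor
  · rintro ⟨⟨hyQ, ⟨x, hxS, hxy⟩, -⟩, hyV⟩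
    exact ⟨hV.eq (hS hxS) hyV hxy ▸ hxS, hyQ⟩
  · rintro ⟨hyS, hyQ⟩
    refine ⟨⟨hyQ, ⟨y, hyS, le_rfl⟩, fun z _ hzy x hxS hxz ↦ ?_⟩, hS hyS⟩
    have hxy : x < y := hxz.trans_lt hzy
    exact hxy.ne (hV.eq (hS hxS) (hS hyS) hxy.le)

open Classical in
theorem card_filter_upperShadow_eq_le {V : Finset P} (hV : IsAntichain (· ≤ ·) (V : Set P))
    (Q T : Set P) :
    #(V.powerset.filter fun S : Finset P ↦ upperShadow Q (S : Set P) = T) ≤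
      2 ^ #{x ∈ V | x ∉ Q} := by
  rw [← card_powerset]
  -- The shadow determines `S ∩ Q`, so `S` is recovered from its part outside `Q`.
  refine card_le_card_of_injOn (fun S ↦ {x ∈ S | x ∉ Q}) (fun S hS ↦ ?_) fun S hS S' hS' heq ↦ ?_
  · rw [mem_coe, mem_filter, mem_powerset] at hS
    exact mem_coe.2 <| mem_powerset.2 <| filter_subset_filter _ hS.1
  · rw [mem_coe, mem_filter, mem_powerset, ← coe_subset] at hS hS'
    have hinter : (S : Set P) ∩ Q = (S' : Set P) ∩ Q := by
      rw [← upperShadow_inter_of_subset hV Q hS.1, ← upperShadow_inter_of_subset hV Q hS'.1,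
        hS.2, hS'.2]
    ext x
    by_cases hx : x ∈ Q
    · simpa [hx] using Set.ext_iff.1 hinter x
    · simpa [hx] using Finset.ext_iff.1 heq x

end Shadow

section Weighting

open Finset Real

variable {P ι : Type*} [Fintype P] [PartialOrder P] [Fintype ι]

theorem mem_antichains {A : Finset P} :
    A ∈ antichains P ↔ IsAntichain (· ≤ ·) (A : Set P) := by
  simp [antichains]

theorem mem_antichainsIn {Q : Set P} {A : Finset P} :
    A ∈ antichainsIn Q ↔ IsAntichain (· ≤ ·) (A : Set P) ∧ (A : Set P) ⊆ Q := by
  simp [antichainsIn, mem_antichains]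

theorem IsWeighting.sum_smul {w : ι → ℝ} (hw : w ∈ stdSimplex ℝ ι) {α : ι → Finset P → ℝ}
    (hα : ∀ i, IsWeighting (α i)) : IsWeighting (∑ i, w i • α i) := by
  simp only [IsWeighting, Finset.sum_apply, Pi.smul_apply, smul_eq_mul]
  refine ⟨fun A hA ↦ sum_nonneg fun i _ ↦ mul_nonneg (hw.1 i) ((hα i).1 A hA), fun A hA ↦ ?_, ?_⟩
  · exact sum_eq_zero fun i _ ↦ by rw [(hα i).2.1 A hA, mul_zero]
  · rw [sum_comm]
    simp [← mul_sum, (hα _).2.2, hw.2]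

theorem IsWeighting.shadowWeight_nonneg {α : Finset P → ℝ} (hα : IsWeighting α) (Q : Set P)
    (T : Finset P) : 0 ≤ shadowWeight α Q T :=
  sum_nonneg fun A hA ↦ hα.1 A (mem_of_mem_filter A hA)

theorem sum_shadowWeight (α : Finset P → ℝ) (Q : Set P) :
    ∑ T ∈ antichainsIn Q, shadowWeight α Q T = ∑ A ∈ antichains P, α A := by
  classical
  have hmaps : ∀ A ∈ antichains P, (upperShadow Q (A : Set P)).toFinset ∈ antichainsIn Q :=
    fun A _ ↦ mem_antichainsIn.2 (by
      simpa using ⟨isAntichain_upperShadow Q A, fun y hy ↦ hy.1⟩)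
  rw [← sum_fiberwise_of_maps_to hmaps]
  refine sum_congr rfl fun T _ ↦ sum_congr (filter_congr fun A _ ↦ ?_) fun _ _ ↦ rfl
  rw [← coe_inj, Set.coe_toFinset]

theorem shadowWeight_sum_smul (w : ι → ℝ) (α : ι → Finset P → ℝ) (Q : Set P) (T : Finset P) :
    shadowWeight (∑ i, w i • α i) Q T = ∑ i, w i * shadowWeight (α i) Q T := by
  simp only [shadowWeight, Finset.sum_apply, Pi.smul_apply, smul_eq_mul, mul_sum]
  exact sum_comm

/-- The entropy `H_{a(Q)}(∂_Q(α))` of the shadow weighting, i.e. the numerator of `critExp α Q`. -/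
noncomputable def shadowEntropy (α : Finset P → ℝ) (Q : Set P) : ℝ :=
  ∑ T ∈ antichainsIn Q, negMulLog (shadowWeight α Q T)

theorem critExp_eq_shadowEntropy_div (α : Finset P → ℝ) (Q : Set P) :
    critExp α Q = shadowEntropy α Q / Q.ncard := by
  simp only [critExp, shadowEntropy, negMulLog_eq_neg]

theorem IsWeighting.shadowEntropy_le_log_card {α : Finset P → ℝ} (hα : IsWeighting α)
    (Q : Set P) : shadowEntropy α Q ≤ log #(antichainsIn Q) :=
  sum_negMulLog_le_log_card (fun T _ ↦ hα.shadowWeight_nonneg Q T)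
    ((sum_shadowWeight α Q).trans hα.2.2)

theorem sum_mul_shadowEntropy_le {w : ι → ℝ} (hw : w ∈ stdSimplex ℝ ι) {α : ι → Finset P → ℝ}
    (hα : ∀ i, IsWeighting (α i)) (Q : Set P) :
    ∑ i, w i * shadowEntropy (α i) Q ≤ shadowEntropy (∑ i, w i • α i) Q := by
  simp only [shadowEntropy, shadowWeight_sum_smul]
  exact sum_mul_sum_negMulLog_le hw fun i T _ ↦ (hα i).shadowWeight_nonneg Q T

end Weighting

section PowersetWeight

open Finset Real

variable {P : Type*} [Fintype P] [PartialOrder P] {V : Finset P}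

open Classical in
/-- The uniform distribution on the subsets of `V`, as a function on finsets. It is a weighting when
`V` is an antichain. -/
noncomputable def powersetWeight (V A : Finset P) : ℝ :=
  if A ⊆ V then (2 ^ #V)⁻¹ else 0

open Classical in
theorem sum_filter_powersetWeight (hV : IsAntichain (· ≤ ·) (V : Set P)) (p : Finset P → Prop) :
    ∑ A ∈ antichains P with p A, powersetWeight V A = #{A ∈ V.powerset | p A} * (2 ^ #V)⁻¹ := by
  have hfilter : {A ∈ {A ∈ antichains P | p A} | A ⊆ V} = {A ∈ V.powerset | p A} := by
    ext A
    have : A ⊆ V → A ∈ antichains P := fun h ↦ mem_antichains.2 (hV.subset (coe_subset.2 h))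
    simp only [mem_filter, mem_powerset]
    tauto
  simp only [powersetWeight, ← sum_filter, hfilter, sum_const, nsmul_eq_mul]

theorem isWeighting_powersetWeight (hV : IsAntichain (· ≤ ·) (V : Set P)) :
    IsWeighting (powersetWeight V) := by
  refine ⟨fun A _ ↦ ?_, fun A hA ↦ if_neg fun h ↦ ?_, ?_⟩
  · unfold powersetWeight
    positivity
  · exact hA (mem_antichains.2 (hV.subset (coe_subset.2 h)))
  · simpa using sum_filter_powersetWeight hV fun _ ↦ True

open Classical in
theorem shadowWeight_powersetWeight_le (hV : IsAntichain (· ≤ ·) (V : Set P)) (Q : Set P)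
    (T : Finset P) : shadowWeight (powersetWeight V) Q T ≤ (2 ^ #{x ∈ V | x ∈ Q})⁻¹ := by
  have hsplit : (2 : ℝ) ^ #V = 2 ^ #{x ∈ V | x ∈ Q} * 2 ^ #{x ∈ V | x ∉ Q} := by
    rw [← pow_add, card_filter_add_card_filter_not]
  have hcard : (#(V.powerset.filter fun S : Finset P ↦ upperShadow Q (S : Set P) = T) : ℝ) ≤
      2 ^ #{x ∈ V | x ∉ Q} :=
    mod_cast card_filter_upperShadow_eq_le hV Q T
  calc shadowWeight (powersetWeight V) Q T
      = #(V.powerset.filter fun S : Finset P ↦ upperShadow Q (S : Set P) = T) * (2 ^ #V)⁻¹ :=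
        sum_filter_powersetWeight hV _
    _ ≤ 2 ^ #{x ∈ V | x ∉ Q} * (2 ^ #V)⁻¹ := by gcongr
    _ = (2 ^ #{x ∈ V | x ∈ Q})⁻¹ := by rw [hsplit]; field_simp

open Classical in
theorem card_mul_log_two_le_shadowEntropy_powersetWeight
    (hV : IsAntichain (· ≤ ·) (V : Set P)) (Q : Set P) :
    #{x ∈ V | x ∈ Q} * log 2 ≤ shadowEntropy (powersetWeight V) Q := by
  have hw := isWeighting_powersetWeight hV
  have hmin : -log (2 ^ #{x ∈ V | x ∈ Q})⁻¹ ≤ shadowEntropy (powersetWeight V) Q :=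
    neg_log_le_sum_negMulLog (fun T _ ↦ hw.shadowWeight_nonneg Q T)
      (fun T _ ↦ shadowWeight_powersetWeight_le hV Q T)
      ((sum_shadowWeight _ Q).trans hw.2.2)
  rwa [log_inv, log_pow, neg_neg] at hmin

end PowersetWeight

section CritStar

open Finset Real

variable {P ι : Type*} [Fintype P] [PartialOrder P] [Fintype ι]

theorem IsWeighting.le_log_card_antichains_div_card [Nonempty P] {α : Finset P → ℝ}
    (hα : IsWeighting α) {c : ℝ} (hc : ∀ Q : Set P, Q.Nonempty → c ≤ critExp α Q) :
    c ≤ log #(antichains P) / Fintype.card P := by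
  have huniv : antichainsIn (Set.univ : Set P) = antichains P := by simp [antichainsIn]
  calc c ≤ critExp α Set.univ := hc _ Set.univ_nonempty
    _ = shadowEntropy α Set.univ / Fintype.card P := by
        rw [critExp_eq_shadowEntropy_div, Set.ncard_univ, Nat.card_eq_fintype_card]
    _ ≤ log #(antichains P) / Fintype.card P := by
        gcongr
        simpa only [huniv] using hα.shadowEntropy_le_log_card Set.univ

theorem critStar_le_log_card_antichains_div_card [Nonempty P] :
    critStar P ≤ log #(antichains P) / Fintype.card P :=
  Real.sSup_le (fun _ ⟨_, _, hα, hc⟩ ↦ hα.le_log_card_antichains_div_card hc) (by positivity)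

theorem IsWeighting.le_critStar [Nonempty P] {α : Finset P → ℝ} (hα : IsWeighting α) {c : ℝ}
    (hc₀ : 0 ≤ c) (hc : ∀ Q : Set P, Q.Nonempty → c ≤ critExp α Q) : c ≤ critStar P :=
  le_csSup ⟨_, fun _ ⟨_, _, hβ, hb⟩ ↦ hβ.le_log_card_antichains_div_card hb⟩ ⟨hc₀, α, hα, hc⟩

open Classical in
theorem ncard_eq_sum_card_fiber {X : Type*} [Fintype X] (f : X → ι) (Q : Set X) :
    Q.ncard = ∑ i, #{x ∈ ({x | f x = i} : Finset X) | x ∈ Q} := by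
  rw [Set.ncard_eq_toFinset_card', card_eq_sum_card_fiberwise (f := f) (t := univ) (by simp)]
  refine sum_congr rfl fun i _ ↦ congrArg card ?_
  ext x
  simp [and_comm]

theorem log_two_div_card_le_critStar [Nonempty P] (f : P → ι)
    (hf : ∀ i, IsAntichain (· ≤ ·) (f ⁻¹' {i})) : log 2 / Fintype.card ι ≤ critStar P := by
  classical
  let V (i : ι) : Finset P := {x | f x = i}
  have hV (i : ι) : IsAntichain (· ≤ ·) (V i : Set P) :=
    (hf i).subset fun x hx ↦ by simpa [V] using hx
  have : Nonempty ι := .map f ‹_›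
  have huniform : (fun _ ↦ (Fintype.card ι : ℝ)⁻¹) ∈ stdSimplex ℝ ι :=
    ⟨fun _ ↦ by positivity, by simp⟩
  have hweight (i : ι) := isWeighting_powersetWeight (hV i)
  refine (IsWeighting.sum_smul huniform hweight).le_critStar (by positivity) fun Q hQ ↦ ?_
  have hQ_pos : (0 : ℝ) < Q.ncard := mod_cast (Set.ncard_pos Q.toFinite).2 hQ
  rw [critExp_eq_shadowEntropy_div, le_div_iff₀ hQ_pos]
  calc log 2 / Fintype.card ι * Q.ncard
      = ∑ i, (Fintype.card ι : ℝ)⁻¹ * (#{x ∈ V i | x ∈ Q} * log 2) := by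
        rw [ncard_eq_sum_card_fiber f, ← mul_sum, ← sum_mul]
        push_cast
        ring
    _ ≤ ∑ i, (Fintype.card ι : ℝ)⁻¹ * shadowEntropy (powersetWeight (V i)) Q := by
        gcongr with i
        exact card_mul_log_two_le_shadowEntropy_powersetWeight (hV i) Q
    _ ≤ shadowEntropy (∑ i, (Fintype.card ι : ℝ)⁻¹ • powersetWeight (V i)) Q :=
        sum_mul_shadowEntropy_le huniform hweight Q

end CritStar

namespace Layered

open Finset

variable {ℓ : ℕ} {s : Fin ℓ → ℕ}

/-- The index `i` of the part `V_i` of the layered poset that contains a given element. -/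
def layer (x : Layered ℓ s) : Fin ℓ := x.1

theorem isAntichain_iff {A : Set (Layered ℓ s)} :
    IsAntichain (· ≤ ·) A ↔ ∀ x ∈ A, ∀ y ∈ A, layer x = layer y := by
  constructor
  · intro hA x hx y hy
    by_contra! hne
    obtain hlt | hlt := hne.lt_or_gt
    · exact hne (congrArg layer (hA.eq hx hy (.inl hlt)))
    · exact hne (congrArg layer (hA.eq hy hx (.inl hlt))).symm
  · rintro hA x hx y hy hne (hlt | rfl)
    · exact hlt.ne (hA x hx y hy)
    · exact hne rfl

theorem isAntichain_layer_preimage (i : Fin ℓ) :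
    IsAntichain (· ≤ ·) (layer ⁻¹' {i} : Set (Layered ℓ s)) :=
  isAntichain_iff.2 fun _ hx _ hy ↦ hx.trans hy.symm

theorem card_filter_layer_eq (i : Fin ℓ) : #{x : Layered ℓ s | layer x = i} = s i := by
  rw [← Fintype.card_subtype, ← Fintype.card_fin (s i)]
  exact Fintype.card_congr (Equiv.sigmaSubtype i)

theorem card_eq_sum : Fintype.card (Layered ℓ s) = ∑ i, s i := by
  change Fintype.card ((i : Fin ℓ) × Fin (s i)) = _
  simp

open Classical in
theorem antichains_erase_empty :
    (antichains (Layered ℓ s)).erase ∅ =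
      univ.biUnion fun i ↦ ({x | layer x = i} : Finset (Layered ℓ s)).powerset.erase ∅ := by
  ext A
  simp only [mem_erase, mem_antichains, mem_biUnion, mem_univ, true_and, mem_powerset]
  constructor
  · rintro ⟨hne, hA⟩
    obtain ⟨x, hx⟩ := nonempty_iff_ne_empty.2 hne
    exact ⟨layer x, hne, fun y hy ↦ by simpa using isAntichain_iff.1 hA y hy x hx⟩
  · rintro ⟨i, hne, hA⟩
    exact ⟨hne, (isAntichain_layer_preimage i).subset fun x hx ↦ by simpa using hA hx⟩

theorem card_antichains : #(antichains (Layered ℓ s)) = ∑ i, (2 ^ s i - 1) + 1 := by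
  classical
  have hempty : ∅ ∈ antichains (Layered ℓ s) := mem_antichains.2 (by simp)
  have hdisjoint : Set.PairwiseDisjoint (univ : Finset (Fin ℓ))
      fun i ↦ ({x | layer x = i} : Finset (Layered ℓ s)).powerset.erase ∅ := by
    intro i _ j _ hij
    refine disjoint_left.2 fun A hAi hAj ↦ hij ?_
    simp only [mem_erase, mem_powerset] at hAi hAj
    obtain ⟨x, hx⟩ := nonempty_iff_ne_empty.2 hAi.1
    exact (mem_filter.1 (hAi.2 hx)).2.symm.trans (mem_filter.1 (hAj.2 hx)).2
  rw [← card_erase_add_one hempty, antichains_erase_empty, card_biUnion hdisjoint]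
  simp only [card_erase_of_mem (empty_mem_powerset _), card_powerset, card_filter_layer_eq]

end Layered

theorem log_mul_two_pow_sub_one_add_one_div {ℓ t : ℕ} (hℓ : 1 ≤ ℓ) (ht : 1 ≤ t) :
    Real.log (ℓ * ((2 : ℝ) ^ t - 1) + 1) / ((ℓ : ℝ) * t) =
      Real.log 2 / ℓ +
        Real.log ((ℓ : ℝ) - ((ℓ : ℝ) - 1) * (1 / 2) ^ t) / ((ℓ : ℝ) * t) := by
  have hℓ' : (1 : ℝ) ≤ ℓ := mod_cast hℓ
  have hpow : (1 / 2 : ℝ) ^ t ≤ 1 := pow_le_one₀ (by norm_num) (by norm_num)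
  have hpos : 0 < (ℓ : ℝ) - ((ℓ : ℝ) - 1) * (1 / 2) ^ t := by nlinarith
  have hfactor : ℓ * ((2 : ℝ) ^ t - 1) + 1 =
      2 ^ t * ((ℓ : ℝ) - ((ℓ : ℝ) - 1) * (1 / 2) ^ t) := by
    rw [one_div, inv_pow]
    field_simp
    ring
  rw [hfactor, Real.log_mul (by positivity) hpos.ne', Real.log_pow]
  field_simp

theorem stmt16_general {ℓ : ℕ} {s : Fin ℓ → ℕ} [Nonempty (Layered ℓ s)] :
    Real.log 2 / ℓ ≤ critStar (Layered ℓ s) ∧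
    critStar (Layered ℓ s) ≤
      Real.log (∑ i, ((2 : ℝ) ^ s i - 1) + 1) / ∑ i, (s i : ℝ) := by
  have hlower := log_two_div_card_le_critStar _ (Layered.isAntichain_layer_preimage (s := s))
  have hupper := critStar_le_log_card_antichains_div_card (P := Layered ℓ s)
  rw [Fintype.card_fin] at hlower
  rw [Layered.card_antichains, Layered.card_eq_sum] at hupper
  push_cast [Nat.one_le_two_pow] at hupper
  exact ⟨hlower, hupper⟩

/-- For all `ℓ ≥ 1` and `t ≥ 1`, the `t`-fold blow-up `C_ℓ(t) = C(t,…,t)` of the chain of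
length `ℓ` satisfies
`log 2 / ℓ ≤ c_⋆(C_ℓ(t)) ≤ log 2 / ℓ + log(ℓ - (ℓ-1) 2^{-t}) / (ℓ t)`. -/
theorem stmt16 (ℓ t : ℕ) (hℓ : 1 ≤ ℓ) (ht : 1 ≤ t) :
    Real.log 2 / ℓ ≤ critStar (Layered ℓ (fun _ => t)) ∧
    critStar (Layered ℓ (fun _ => t)) ≤
      Real.log 2 / ℓ +
        Real.log ((ℓ : ℝ) - ((ℓ : ℝ) - 1) * (1 / 2) ^ t) / ((ℓ : ℝ) * t) := by
  have : Nonempty (Layered ℓ fun _ ↦ t) := ⟨⟨⟨0, hℓ⟩, ⟨0, ht⟩⟩⟩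
  rw [← log_mul_two_pow_sub_one_add_one_div hℓ ht]
  simpa only [Finset.sum_const, Finset.card_fin, nsmul_eq_mul] using
    stmt16_general (s := fun _ : Fin ℓ ↦ t)
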